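/- arXiv:1508.00992 — 2 statements merged into one kernel-verified Lean document; each statement's English description precedes it below -/
import Mathlib

section
/- Let D : I ⥤ Cat be a filtered diagram such that D_i is an acyclic category for every object i of I, and let C = colim_I D in Cat. Then every endomorphism in C is an identity morphism. -/
open CategoryTheory CategoryTheory.Limits

universe u

/-- A category is *acyclic* if every endomorphism is an identity and there are no
antiparallel morphisms between distinct objects (hence no inverses). -/
def IsAcyclicCat (C : Type u) [Category.{u} C] : Prop :=
  (∀ (x : C) (f : x ⟶ x), f = 𝟙 x) ∧
    ∀ x y : C, x ≠ y → ¬(Nonempty (x ⟶ y) ∧ Nonempty (y ⟶ x))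

/-!
The functor `Cat ⥤ Type` of objects has a right adjoint, so the objects of `C` are the colimit of
the objects of the `D i`. Hence every object of `C` comes from a stage, and two objects of stages
with the same image in `C` already agree at a later stage. Consequently the morphisms of `C` that
come from a stage contain the identities and are closed under composition, and since no proper
wide subcategory of a colimit receives all the stages, they are all the morphisms of `C`. An
endomorphism of `C` thus comes from a morphism of some `D i` whose endpoints agree in `C`, and
therefore from an endomorphism of a later stage, which is an identity.
-/

universe w w' v v' u'

namespace CatColimit

/-- The codiscrete category on a type, with exactly one morphism between any two objects. Unlike
in `Codiscrete.functorToCat`, the hom-types live in an arbitrary universe, so that it is right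
adjoint to `Cat.objects` on all of `Cat.{v, u}`. -/
def codiscrete : Type u ⥤ Cat.{v, u} where
  obj A := Cat.of (ULiftHom.{v} (Codiscrete A))
  map f := (ULiftHom.down ⋙ Codiscrete.functorOfFun f ⋙ ULiftHom.up).toCatHom

/-- The functor `Cat.objects` is left adjoint to `codiscrete`: a functor to a codiscrete category
is a function on objects. -/
def objectsCodiscreteAdj : Cat.objects.{v, u} ⊣ codiscrete.{u, v} :=
  Adjunction.mkOfHomEquiv
    { homEquiv _ _ :=
        { toFun f := (Codiscrete.functor (fun x ↦ f x) ⋙ ULiftHom.up).toCatHom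
          invFun F := ↾fun x ↦ (ULiftHom.objDown.{u, v} (F.toFunctor.obj x)).as
          left_inv _ := rfl
          right_inv _ := rfl }
      homEquiv_naturality_left_symm _ _ := rfl
      homEquiv_naturality_right _ _ := rfl }

instance preservesColimitsOfSize_objects : PreservesColimitsOfSize.{w', w} Cat.objects.{v, u} :=
  objectsCodiscreteAdj.leftAdjoint_preservesColimits

section Functor

variable {C : Type u} [Category.{v} C] {E : Type u'} [Category.{v'} E]

lemma arrow_mk_comp_eq_map (F : C ⥤ E) {x y z : E} {f : x ⟶ y} {f' : y ⟶ z} {a b b' d : C}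
    {g : a ⟶ b} {g' : b' ⟶ d} (h : b = b') (hf : Arrow.mk f = Arrow.mk (F.map g))
    (hf' : Arrow.mk f' = Arrow.mk (F.map g')) :
    Arrow.mk (f ≫ f') = Arrow.mk (F.map (g ≫ eqToHom h ≫ g')) := by
  subst h
  cases hf
  cases hf'
  simp

lemma eq_id_of_arrow_mk_eq_mk_id {x y : C} {f : x ⟶ x} (h : Arrow.mk f = Arrow.mk (𝟙 y)) :
    f = 𝟙 x := by
  obtain rfl : x = y := congrArg Comma.left h
  exact (Arrow.mk_inj _ _).1 h

/-- The factorization of a functor through the wide subcategory of morphisms satisfying a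
multiplicative property, when the functor takes values in such morphisms. -/
def wideSubcategoryLift (P : MorphismProperty E) [P.IsMultiplicative] (F : C ⥤ E)
    (hF : ∀ ⦃a b : C⦄ (g : a ⟶ b), P (F.map g)) : C ⥤ WideSubcategory P where
  obj a := ⟨F.obj a⟩
  map g := ⟨F.map g, hF g⟩

end Functor

variable {I : Type w} [Category.{w'} I] {D : I ⥤ Cat.{v, u}} {c : Cocone D}

/-- The cocone with point the wide subcategory of `c.pt` of morphisms satisfying a multiplicative
property, when the legs of `c` take values in such morphisms. -/
def wideSubcategoryCocone (P : MorphismProperty c.pt) [P.IsMultiplicative]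
    (hP : ∀ (i : I) ⦃a b : D.obj i⦄ (g : a ⟶ b), P ((c.ι.app i).toFunctor.map g)) :
    Cocone D where
  pt := Cat.of (WideSubcategory P)
  ι :=
    { app i := (wideSubcategoryLift P (c.ι.app i).toFunctor (hP i)).toCatHom
      naturality i j u := by
        refine Cat.ext ?_
        simp only [← c.w u]
        rfl }

lemma morphismProperty_of_isColimit (hc : IsColimit c) (P : MorphismProperty c.pt)
    [P.IsMultiplicative]
    (hP : ∀ (i : I) ⦃a b : D.obj i⦄ (g : a ⟶ b), P ((c.ι.app i).toFunctor.map g))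
    {x y : c.pt} (f : x ⟶ y) : P f := by
  let s := wideSubcategoryCocone P hP
  let inclusion : s.pt ⟶ c.pt := (wideSubcategoryInclusion P).toCatHom
  -- The descended functor is a section of the inclusion, so `f` is the image of a morphism of the
  -- wide subcategory.
  have desc_comp_inclusion : hc.desc s ≫ inclusion = 𝟙 c.pt := hc.hom_ext fun i ↦ by
    rw [hc.fac_assoc, Category.comp_id]
    rfl
  have hf : Arrow.mk ((hc.desc s).toFunctor.map f).hom = Arrow.mk f :=
    congrArg (fun F : c.pt ⟶ c.pt ↦ F.toFunctor.mapArrow.obj (Arrow.mk f)) desc_comp_inclusion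
  rw [← P.arrow_mk_mem_toSet_iff, ← hf, P.arrow_mk_mem_toSet_iff]
  exact ((hc.desc s).toFunctor.map f).property

lemma exists_obj_eq_of_isColimit (hc : IsColimit c) (x : c.pt) :
    ∃ (i : I) (a : D.obj i), (c.ι.app i).toFunctor.obj a = x :=
  Types.jointly_surjective_of_isColimit (isColimitOfPreserves Cat.objects hc) x

variable (c) in
/-- The morphisms of the point of a cocone in `Cat` that are the image of a morphism of some stage
of the diagram. -/
def stageMorphisms : MorphismProperty c.pt :=
  .ofHoms fun g : Σ i, Arrow (D.obj i) ↦ (c.ι.app g.1).toFunctor.map g.2.hom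

lemma stageMorphisms_iff {x y : c.pt} (f : x ⟶ y) :
    stageMorphisms c f ↔ ∃ (i : I) (a b : D.obj i) (g : a ⟶ b),
      Arrow.mk f = Arrow.mk ((c.ι.app i).toFunctor.map g) := by
  rw [stageMorphisms, MorphismProperty.ofHoms_iff]
  exact ⟨fun ⟨⟨i, g⟩, h⟩ ↦ ⟨i, g.left, g.right, g.hom, h⟩,
    fun ⟨i, _, _, g, h⟩ ↦ ⟨⟨i, Arrow.mk g⟩, h⟩⟩

lemma arrow_mk_ι_map_map {i k : I} (u : i ⟶ k) {a b : D.obj i} (g : a ⟶ b) :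
    Arrow.mk ((c.ι.app k).toFunctor.map ((D.map u).toFunctor.map g)) =
      Arrow.mk ((c.ι.app i).toFunctor.map g) :=
  congrArg (fun F : D.obj i ⟶ c.pt ↦ F.toFunctor.mapArrow.obj (Arrow.mk g)) (c.w u)

section Filtered

variable [IsFilteredOrEmpty I]

lemma exists_map_obj_eq_of_ι_obj_eq (hc : IsColimit c) {i j : I} {a : D.obj i} {b : D.obj j}
    (h : (c.ι.app i).toFunctor.obj a = (c.ι.app j).toFunctor.obj b) :
    ∃ (k : I) (u : i ⟶ k) (v : j ⟶ k), (D.map u).toFunctor.obj a = (D.map v).toFunctor.obj b :=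
  (Types.FilteredColimit.isColimit_eq_iff _ (isColimitOfPreserves Cat.objects hc)).1 h

lemma exists_map_obj_eq_of_ι_obj_eq' (hc : IsColimit c) {i : I} {a b : D.obj i}
    (h : (c.ι.app i).toFunctor.obj a = (c.ι.app i).toFunctor.obj b) :
    ∃ (k : I) (u : i ⟶ k), (D.map u).toFunctor.obj a = (D.map u).toFunctor.obj b :=
  (Types.FilteredColimit.isColimit_eq_iff' (isColimitOfPreserves Cat.objects hc) _ _).1 h

lemma stageMorphisms_isMultiplicative (hc : IsColimit c) :
    (stageMorphisms c).IsMultiplicative where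
  id_mem x := by
    obtain ⟨i, a, rfl⟩ := exists_obj_eq_of_isColimit hc x
    exact (stageMorphisms_iff _).2
      ⟨i, a, a, 𝟙 a, congrArg Arrow.mk ((c.ι.app i).toFunctor.map_id a).symm⟩
  comp_mem f f' hf hf' := by
    obtain ⟨i, a, b, g, hg⟩ := (stageMorphisms_iff f).1 hf
    obtain ⟨j, b', d, g', hg'⟩ := (stageMorphisms_iff f').1 hf'
    have ι_obj_eq : (c.ι.app i).toFunctor.obj b = (c.ι.app j).toFunctor.obj b' :=
      (congrArg Comma.right hg).symm.trans (congrArg Comma.left hg')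
    obtain ⟨k, u, v, h⟩ := exists_map_obj_eq_of_ι_obj_eq hc ι_obj_eq
    exact (stageMorphisms_iff _).2 ⟨k, _, _, _, arrow_mk_comp_eq_map _ h
      (hg.trans (arrow_mk_ι_map_map u g).symm) (hg'.trans (arrow_mk_ι_map_map v g').symm)⟩

lemma exists_hom_of_isColimit (hc : IsColimit c) {x y : c.pt} (f : x ⟶ y) :
    ∃ (i : I) (a b : D.obj i) (g : a ⟶ b),
      Arrow.mk f = Arrow.mk ((c.ι.app i).toFunctor.map g) := by
  have := stageMorphisms_isMultiplicative hc
  exact (stageMorphisms_iff f).1 <| morphismProperty_of_isColimit hc (stageMorphisms c)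
    (fun i a b g ↦ (stageMorphisms_iff _).2 ⟨i, a, b, g, rfl⟩) f

lemma exists_endo_of_isColimit (hc : IsColimit c) {x : c.pt} (f : x ⟶ x) :
    ∃ (i : I) (a : D.obj i) (g : a ⟶ a),
      Arrow.mk f = Arrow.mk ((c.ι.app i).toFunctor.map g) := by
  obtain ⟨i, a, b, g, hg⟩ := exists_hom_of_isColimit hc f
  have ι_obj_eq : (c.ι.app i).toFunctor.obj a = (c.ι.app i).toFunctor.obj b :=
    (congrArg Comma.left hg).symm.trans (congrArg Comma.right hg)
  obtain ⟨k, u, h⟩ := exists_map_obj_eq_of_ι_obj_eq' hc ι_obj_eq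
  refine ⟨k, (D.map u).toFunctor.obj a, (D.map u).toFunctor.map g ≫ eqToHom h.symm, ?_⟩
  calc
    Arrow.mk f = Arrow.mk ((c.ι.app i).toFunctor.map g) := hg
    _ = Arrow.mk ((c.ι.app k).toFunctor.map ((D.map u).toFunctor.map g)) :=
      (arrow_mk_ι_map_map u g).symm
    _ = Arrow.mk ((c.ι.app k).toFunctor.map ((D.map u).toFunctor.map g ≫ eqToHom h.symm)) :=
      congrArg (c.ι.app k).toFunctor.mapArrow.obj (Arrow.arrow_mk_comp_eqToHom _ h.symm).symm

end Filtered

end CatColimit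

open CatColimit in
theorem filteredColimit_of_acyclic_endo_eq_id_general
    {I : Type w} [Category.{w'} I] [IsFilteredOrEmpty I] {D : I ⥤ Cat.{v, u}}
    (hD : ∀ (i : I) (a : D.obj i) (g : a ⟶ a), g = 𝟙 a)
    {c : Cocone D} (hc : IsColimit c) (x : c.pt) (f : x ⟶ x) : f = 𝟙 x := by
  obtain ⟨i, a, g, hg⟩ := exists_endo_of_isColimit hc f
  rw [hD i a g, CategoryTheory.Functor.map_id] at hg
  exact eq_id_of_arrow_mk_eq_mk_id hg

/-- if `D : I ⥤ Cat` is a filtered diagram of acyclic categories and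
`C = colim_I D` in `Cat`, then every endomorphism in `C` is an identity. -/
theorem filteredColimit_of_acyclic_endo_eq_id
    (I : Type u) [Category.{u} I] [IsFiltered I] (D : I ⥤ Cat.{u, u})
    (hD : ∀ i : I, IsAcyclicCat (D.obj i))
    (c : Cocone D) (hc : IsColimit c) :
    ∀ (x : c.pt) (f : x ⟶ x), f = 𝟙 x :=
  filteredColimit_of_acyclic_endo_eq_id_general (fun i ↦ (hD i).1) hc
end

section
/- Let D : I ⥤ Cat be a filtered diagram such that D_i is an acyclic category for every object i of I, and let C = colim_I D in Cat. Then C has no antiparallel morphisms between distinct objects: if x ≠ y are objects of C, then C(x,y) and C(y,x) are not both nonempty. -/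
open CategoryTheory CategoryTheory.Limits

universe u

/-!
Taking objects is left adjoint to forming codiscrete categories, so the objects of a filtered
colimit form the filtered colimit of the sets of objects. Consequently two composable morphisms
coming from stages come from composable morphisms of one stage, and the morphisms coming from stages
form a wide subcategory of the colimit. By the universal property this subcategory is everything.
An antiparallel pair in the colimit is therefore the image of a pair `p ⟶ q ⟶ r` at some stage
with `p` and `r` identified in the colimit. At a later stage `p` and `r` become equal, and there
antisymmetry identifies the images of `p` and `q`.
-/

universe w' w v

section Codiscrete

/-- Functions from the objects of `C` to `A`, as functors to the codiscrete category on `A`. The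
morphisms of `Codiscrete A` live in `Type`, hence the lift to `Cat.{v, u}` by `ULiftHom`. -/
def catObjectsHomEquiv (C : Cat.{v, u}) (A : Type u) :
    (Cat.objects.obj C ⟶ A) ≃ (C ⟶ Cat.of (ULiftHom.{v} (Codiscrete A))) where
  toFun f := (Codiscrete.functor f ⋙ ULiftHom.up).toCatHom
  invFun F := ↾(Codiscrete.invFunctor
    (F.toFunctor ⋙ (ULiftHom.down : ULiftHom.{v} (Codiscrete A) ⥤ Codiscrete A)))
  left_inv _ := rfl
  right_inv _ := rfl

instance isLeftAdjoint_catObjects : Cat.objects.{v, u}.IsLeftAdjoint :=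
  (Adjunction.adjunctionOfEquivRight catObjectsHomEquiv fun _ _ _ _ _ => rfl).isLeftAdjoint

end Codiscrete

section WideSubcategory

variable {C : Type*} [Category* C] {E : Type*} [Category* E]

/-- The factorization of a functor through the wide subcategory given by a multiplicative property
that holds for the images of all morphisms. -/
def wideSubcategoryLift (W : MorphismProperty E) [W.IsMultiplicative] (F : C ⥤ E)
    (hF : ∀ ⦃a b : C⦄ (f : a ⟶ b), W (F.map f)) : C ⥤ WideSubcategory W where
  obj a := ⟨F.obj a⟩
  map f := ⟨F.map f, hF f⟩

lemma wideSubcategoryLift_congr {W : MorphismProperty E} [W.IsMultiplicative] {F G : C ⥤ E}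
    (hF : ∀ ⦃a b : C⦄ (f : a ⟶ b), W (F.map f)) (hG : ∀ ⦃a b : C⦄ (f : a ⟶ b), W (G.map f))
    (h : F = G) : wideSubcategoryLift W F hF = wideSubcategoryLift W G hG := by
  subst h
  rfl

lemma morphismProperty_eq_top_of_wideSubcategory_section {W : MorphismProperty E}
    [W.IsMultiplicative] {S : E ⥤ WideSubcategory W} (hS : S ⋙ wideSubcategoryInclusion W = 𝟭 E) :
    W = ⊤ := by
  ext x y φ
  simp only [MorphismProperty.top_apply, iff_true]
  exact W.of_eq (S.map φ).property (Functor.congr_obj hS x) (Functor.congr_obj hS y)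
    (Functor.congr_hom hS.symm φ)

end WideSubcategory

section Cocone

variable {I : Type w} [Category.{w'} I] {D : I ⥤ Cat.{v, u}} {c : Cocone D}

lemma catCocone_w_toFunctor (c : Cocone D) {i j : I} (f : i ⟶ j) :
    (D.map f).toFunctor ⋙ (c.ι.app j).toFunctor = (c.ι.app i).toFunctor :=
  congrArg Cat.Hom.toFunctor (c.w f)

lemma exists_catColimit_ι_obj_eq (hc : IsColimit c) (x : c.pt) :
    ∃ (i : I) (a : D.obj i), (c.ι.app i).toFunctor.obj a = x :=
  Types.jointly_surjective_of_isColimit (isColimitOfPreserves Cat.objects hc) x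

lemma morphismProperty_eq_top_of_isColimit (hc : IsColimit c) (W : MorphismProperty c.pt)
    [W.IsMultiplicative]
    (hW : ∀ (i : I) ⦃a b : D.obj i⦄ (f : a ⟶ b), W ((c.ι.app i).toFunctor.map f)) :
    W = ⊤ := by
  let s : Cocone D :=
    { pt := Cat.of (WideSubcategory W)
      ι :=
        { app i := (wideSubcategoryLift W _ (hW i)).toCatHom
          naturality i j f := Cat.Hom.ext <| wideSubcategoryLift_congr
            (fun _ _ g => hW j ((D.map f).toFunctor.map g)) (hW i) (catCocone_w_toFunctor c f) } }
  let inclusion : s.pt ⟶ c.pt := (wideSubcategoryInclusion W).toCatHom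
  have section_eq : hc.desc s ≫ inclusion = 𝟙 c.pt := hc.hom_ext fun i =>
    calc c.ι.app i ≫ hc.desc s ≫ inclusion
      _ = s.ι.app i ≫ inclusion := hc.fac_assoc s i inclusion
      _ = c.ι.app i := rfl
      _ = c.ι.app i ≫ 𝟙 c.pt := (Category.comp_id _).symm
  exact morphismProperty_eq_top_of_wideSubcategory_section
    (congrArg Cat.Hom.toFunctor section_eq)

/-- The morphisms of the point of a cocone of categories that are images of morphisms of the
diagram. Heterogeneous equality absorbs the identifications of source and target. -/
def stageMorphisms (c : Cocone D) : MorphismProperty c.pt := fun x y φ =>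
  ∃ (i : I) (a b : D.obj i) (f : a ⟶ b), (c.ι.app i).toFunctor.obj a = x ∧
    (c.ι.app i).toFunctor.obj b = y ∧ (c.ι.app i).toFunctor.map f ≍ φ

section Filtered

variable [IsFilteredOrEmpty I]

lemma catColimit_ι_obj_eq_iff (hc : IsColimit c) {i j : I} {a : D.obj i} {b : D.obj j} :
    (c.ι.app i).toFunctor.obj a = (c.ι.app j).toFunctor.obj b ↔
      ∃ (k : I) (f : i ⟶ k) (g : j ⟶ k),
        (D.map f).toFunctor.obj a = (D.map g).toFunctor.obj b :=
  Types.FilteredColimit.isColimit_eq_iff _ (isColimitOfPreserves Cat.objects hc)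

lemma catColimit_ι_obj_eq_iff_of_same_stage (hc : IsColimit c) {i : I} {a b : D.obj i} :
    (c.ι.app i).toFunctor.obj a = (c.ι.app i).toFunctor.obj b ↔
      ∃ (k : I) (f : i ⟶ k), (D.map f).toFunctor.obj a = (D.map f).toFunctor.obj b :=
  Types.FilteredColimit.isColimit_eq_iff' (isColimitOfPreserves Cat.objects hc) a b

lemma exists_composable_of_stageMorphisms (hc : IsColimit c) {x y z : c.pt} {φ : x ⟶ y}
    {ψ : y ⟶ z} (hφ : stageMorphisms c φ) (hψ : stageMorphisms c ψ) :
    ∃ (k : I) (p q r : D.obj k) (f : p ⟶ q) (g : q ⟶ r),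
      (c.ι.app k).toFunctor.obj p = x ∧ (c.ι.app k).toFunctor.obj q = y ∧
      (c.ι.app k).toFunctor.obj r = z ∧
      (c.ι.app k).toFunctor.map f ≍ φ ∧ (c.ι.app k).toFunctor.map g ≍ ψ := by
  obtain ⟨i, a, b, f, rfl, rfl, hf⟩ := hφ
  obtain ⟨j, b', d, g, hb, rfl, hg⟩ := hψ
  obtain ⟨k, s, t, hst⟩ := (catColimit_ι_obj_eq_iff hc).1 hb.symm
  have hs := catCocone_w_toFunctor c s
  have ht := catCocone_w_toFunctor c t
  refine ⟨k, _, _, _, (D.map s).toFunctor.map f, eqToHom hst ≫ (D.map t).toFunctor.map g,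
    Functor.congr_obj hs a, Functor.congr_obj hs b, Functor.congr_obj ht d,
    (Functor.hcongr_hom hs f).trans hf, ?_⟩
  rw [Functor.map_comp, eqToHom_map]
  exact (eqToHom_comp_heq _ _).trans ((Functor.hcongr_hom ht g).trans hg)

lemma isMultiplicative_stageMorphisms (hc : IsColimit c) :
    (stageMorphisms c).IsMultiplicative where
  id_mem x := by
    obtain ⟨i, a, rfl⟩ := exists_catColimit_ι_obj_eq hc x
    exact ⟨i, a, a, 𝟙 a, rfl, rfl, heq_of_eq ((c.ι.app i).toFunctor.map_id a)⟩
  comp_mem φ ψ hφ hψ := by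
    obtain ⟨k, p, q, r, f, g, rfl, rfl, rfl, hf, hg⟩ :=
      exists_composable_of_stageMorphisms hc hφ hψ
    obtain rfl := eq_of_heq hf
    obtain rfl := eq_of_heq hg
    exact ⟨k, p, r, f ≫ g, rfl, rfl, heq_of_eq ((c.ι.app k).toFunctor.map_comp f g)⟩

lemma stageMorphisms_eq_top (hc : IsColimit c) : stageMorphisms c = ⊤ :=
  have := isMultiplicative_stageMorphisms hc
  morphismProperty_eq_top_of_isColimit hc _ fun i a b f => ⟨i, a, b, f, rfl, rfl, HEq.rfl⟩

theorem filteredColimit_of_acyclic_no_antiparallel_general (hc : IsColimit c)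
    (hD : ∀ (i : I) (a b : D.obj i), (a ⟶ b) → (b ⟶ a) → a = b)
    (x y : c.pt) (φ : x ⟶ y) (ψ : y ⟶ x) : x = y := by
  have hstage {x y : c.pt} (φ : x ⟶ y) : stageMorphisms c φ :=
    stageMorphisms_eq_top hc ▸ MorphismProperty.top_apply φ
  obtain ⟨k, p, q, r, f, g, rfl, rfl, hr, -, -⟩ :=
    exists_composable_of_stageMorphisms hc (hstage φ) (hstage ψ)
  obtain ⟨l, s, hrp⟩ := (catColimit_ι_obj_eq_iff_of_same_stage hc).1 hr
  have hpq : (D.map s).toFunctor.obj p = (D.map s).toFunctor.obj q :=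
    hD l _ _ ((D.map s).toFunctor.map f) ((D.map s).toFunctor.map g ≫ eqToHom hrp)
  exact (catColimit_ι_obj_eq_iff_of_same_stage hc).2 ⟨l, s, hpq⟩

end Filtered

end Cocone

/-- if `D : I ⥤ Cat` is a filtered diagram of acyclic categories and
`C = colim_I D` in `Cat`, then `C` has no antiparallel morphisms between distinct
objects: for `x ≠ y`, the hom-sets `C(x,y)` and `C(y,x)` are not both nonempty. -/
theorem filteredColimit_of_acyclic_no_antiparallel
    (I : Type u) [Category.{u} I] [IsFiltered I] (D : I ⥤ Cat.{u, u})
    (hD : ∀ i : I, IsAcyclicCat (D.obj i))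
    (c : Cocone D) (hc : IsColimit c) :
    ∀ x y : c.pt, x ≠ y → ¬(Nonempty (x ⟶ y) ∧ Nonempty (y ⟶ x)) := by
  rintro x y hxy ⟨⟨φ⟩, ⟨ψ⟩⟩
  exact hxy <| filteredColimit_of_acyclic_no_antiparallel_general hc
    (fun i a b f g => by_contra fun hab => (hD i).2 a b hab ⟨⟨f⟩, ⟨g⟩⟩) x y φ ψ
end
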